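/- Let (R,m) be a Cohen–Macaulay local ring of dimension two with infinite residue field, I_1,…,I_s m-primary ideals with s≥2, F = {F(n)}_{n∈ℤ^s} an I-admissible filtration of ideals in R, and A = {x_{ij}∈I_i : j=1,2; i=1,…,s} a good complete reduction of F. Suppose H^1_{R_{++}}(R(F))_n = 0 for all n≥0. Then P(F) ⊆ ℕ^s and the map f(n) = n+e gives a one-to-one correspondence between P(F) and {r∈R_A(F) : r≥e}, with inverse f^{−1}(r) = r−e. -/

import Mathlib

/-! Common definitions for multigraded filtrations of ideals
(following Sarkar–Verma, "Postulation and reduction vectors of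
multigraded filtrations of ideals"). -/

open Finset IsLocalRing

/-- The vector `e = (1,…,1) ∈ ℤˢ`. -/
def evec (s : ℕ) : Fin s → ℤ := fun _ => 1

/-- `n⁺`, the componentwise positive part of a vector. -/
def vplus {s : ℕ} (n : Fin s → ℤ) : Fin s → ℤ := fun i => max (n i) 0

/-- `I^n = I₁^{n₁} ⋯ I_s^{n_s}` with the convention `I_i^{n_i} = R` for `n_i ≤ 0`. -/
def prodPow {R : Type*} [CommRing R] {s : ℕ} (I : Fin s → Ideal R) (n : Fin s → ℤ) : Ideal R :=
  ∏ i, I i ^ (n i).toNat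

/-- An ideal is `m`-primary iff it is proper and contains a power of the maximal ideal. -/
def IsMPrimary (R : Type*) [CommRing R] [IsLocalRing R] (I : Ideal R) : Prop :=
  I ≠ ⊤ ∧ maximalIdeal R ≤ I.radical

/-- A Cohen–Macaulay local ring: some system of parameters (a regular sequence of
length equal to the Krull dimension inside the maximal ideal) exists. -/
def IsCMLocal (R : Type*) [CommRing R] [IsLocalRing R] : Prop :=
  ∃ rs : List R, (∀ x ∈ rs, x ∈ maximalIdeal R) ∧ RingTheory.Sequence.IsRegular R rs ∧
    (rs.length : WithBot ℕ∞) = ringKrullDim R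

/-- A `ℤˢ`-graded `I`-admissible filtration of ideals.  Admissibility (finiteness of the
extended Rees ring `R'(F)` as a module over `R'(I)`) is recorded through the equivalent
condition that `F(n + m) = I^n F(m)` for all `n ≥ 0`, for a suitable fixed `m ≥ 0`. -/
structure AdmissibleFiltration (R : Type*) [CommRing R] (s : ℕ) (I : Fin s → Ideal R) where
  F : (Fin s → ℤ) → Ideal R
  prodPow_le : ∀ n, prodPow I n ≤ F n
  mul_le : ∀ m n, F m * F n ≤ F (m + n)
  antitone : ∀ m n : Fin s → ℤ, m ≤ n → F n ≤ F m
  plus_eq : ∀ n, F n = F (vplus n)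
  admissible : ∃ m : Fin s → ℤ, 0 ≤ m ∧
    ∀ n : Fin s → ℤ, 0 ≤ n → F (n + m) = prodPow I n * F m

/-- The length `λ_R(M)` of a module, as an integer (the longest chain of submodules;
this is the usual length for modules of finite length). -/
noncomputable def lenI (R M : Type*) [CommRing R] [AddCommGroup M] [Module R M] : ℤ :=
  (((Order.krullDim (Submodule R M)).unbotD 0).toNat : ℤ)

/-- The Hilbert function `H_F(n) = λ(R/F(n))` of a filtration. -/
noncomputable def hilbFn {R : Type*} [CommRing R] {s : ℕ} {I : Fin s → Ideal R}
    (F : AdmissibleFiltration R s I) (n : Fin s → ℤ) : ℤ :=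
  lenI R (R ⧸ F.F n)

/-- The multigraded Hilbert polynomial with coefficient data `c = (e_α)`:
`P(n) = Σ_{|α| ≤ d} (−1)^{d−|α|} e_α ∏ᵢ binom(nᵢ+αᵢ−1, αᵢ)`. -/
noncomputable def hilbPoly (s d : ℕ) (c : (Fin s → ℕ) → ℤ) (n : Fin s → ℤ) : ℤ :=
  ∑ α ∈ Finset.univ.filter (fun α : Fin s → Fin (d+1) => (∑ i, (α i : ℕ)) ≤ d),
    (-1)^(d - ∑ i, (α i : ℕ)) * c (fun i => (α i : ℕ)) *
      ∏ i, Ring.choose (n i + ((α i : ℕ) : ℤ) - 1) (α i : ℕ)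

/-- `c : (Fin s → ℕ) → ℤ` is the family of Hilbert coefficients of `F`:
the corresponding polynomial agrees with the Hilbert function for all large `n`. -/
noncomputable def IsHilbCoeffs {R : Type*} [CommRing R] {s : ℕ} {I : Fin s → Ideal R}
    (F : AdmissibleFiltration R s I) (d : ℕ) (c : (Fin s → ℕ) → ℤ) : Prop :=
  ∃ N : ℕ, ∀ n : Fin s → ℤ, (∀ i, (N : ℤ) ≤ n i) → hilbPoly s d c n = hilbFn F n

/-- The Samuel polynomial `P_a(n) = Σ_{i=0}^{d} (−1)^i e_i binom(n+d−1−i, d−i)` with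
coefficient data `c = (e_i)`. -/
noncomputable def samuelPoly (d : ℕ) (c : ℕ → ℤ) (n : ℤ) : ℤ :=
  ∑ i ∈ Finset.range (d + 1), (-1)^i * c i * Ring.choose (n + (d : ℤ) - 1 - (i : ℤ)) (d - i)

/-- `c` is the family of Hilbert coefficients of the `m`-primary ideal `a`. -/
noncomputable def IsSamuelCoeffs {R : Type*} [CommRing R] (a : Ideal R) (d : ℕ)
    (c : ℕ → ℤ) : Prop :=
  ∃ N : ℕ, ∀ n : ℕ, N ≤ n → samuelPoly d c (n : ℤ) = lenI R (R ⧸ a ^ n)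

section Reductions

variable {R : Type*} [CommRing R] {s d : ℕ} {I : Fin s → Ideal R}

/-- The ideal `J = (y₁,…,y_d)` of a complete reduction datum, where `y_j = x_{1j}⋯x_{sj}`. -/
def crIdeal (x : Fin s → Fin d → R) : Ideal R :=
  Ideal.span (Set.range fun j => ∏ i, x i j)

/-- `A = {x_{ij} ∈ I_i}` is a complete reduction of `F`: `J·F(n) = F(n+e)` for all large `n`. -/
def IsCompleteReduction (F : AdmissibleFiltration R s I) (x : Fin s → Fin d → R) : Prop :=
  (∀ i j, x i j ∈ I i) ∧
  ∃ N : ℕ, ∀ n : Fin s → ℤ, (∀ i, (N : ℤ) ≤ n i) →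
    crIdeal x * F.F n = F.F (n + evec s)

/-- A good complete reduction: in addition `F(m) ∩ (y₁) = y₁ F(m−e)` for all large `m`. -/
def IsGoodCompleteReduction (F : AdmissibleFiltration R s I) (x : Fin s → Fin d → R) : Prop :=
  IsCompleteReduction F x ∧
  ∀ h : 0 < d, ∃ N : ℕ, ∀ m : Fin s → ℤ, (∀ i, (N : ℤ) ≤ m i) →
    F.F m ⊓ Ideal.span {∏ i, x i ⟨0, h⟩} =
      Ideal.span {∏ i, x i ⟨0, h⟩} * F.F (m - evec s)

end Reductions

/-- The first difference operator `Δ¹ f (n) = f(n+e) − f(n)`; `Δ^k` is its `k`-th iterate. -/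
def deltaOp {s : ℕ} (f : (Fin s → ℤ) → ℤ) : (Fin s → ℤ) → ℤ :=
  fun n => f (n + evec s) - f n

/-- The Ratliff–Rush closure filtration `F̆(n) = ⋃_{k ≥ 1} (F(n+ke) : F(e)^k)`. -/
def ratliffRush {R : Type*} [CommRing R] {s : ℕ} {I : Fin s → Ideal R}
    (F : AdmissibleFiltration R s I) (n : Fin s → ℤ) : Ideal R :=
  ⨆ k : ℕ, (F.F (n + ((k + 1) : ℕ) • evec s)).colon ((F.F (evec s) ^ (k + 1) : Ideal R) : Set R)

/-- Vanishing of `H¹_{R₊₊}(R(F))_n` for all `n ∈ ℕˢ`.  By Proposition 4.1 of the paper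
(see STATEMENT 9), the degree-`n` component of this local cohomology module is isomorphic
to `F̆(n)/F(n)`, so its vanishing for all `n ≥ 0` is the statement that the Ratliff–Rush
closure filtration agrees with `F` in all nonnegative degrees. -/
def H1ReesVanishes {R : Type*} [CommRing R] {s : ℕ} {I : Fin s → Ideal R}
    (F : AdmissibleFiltration R s I) : Prop :=
  ∀ n : Fin s → ℤ, 0 ≤ n → ratliffRush F n = F.F n

section PostulationReduction

variable {R : Type*} [CommRing R] {s d : ℕ} {I : Fin s → Ideal R}

/-- The set `P(F)` of postulation vectors of `F` (w.r.t. the Hilbert coefficient data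
`c` of its Hilbert polynomial): those `n ∈ ℤˢ` with `H_F(m) = P_F(m)` for all `m ≥ n`. -/
noncomputable def postSet (F : AdmissibleFiltration R s I) (d : ℕ)
    (c : (Fin s → ℕ) → ℤ) : Set (Fin s → ℤ) :=
  {n | ∀ m : Fin s → ℤ, n ≤ m → hilbFn F m = hilbPoly s d c m}

/-- The set `R_A(F)` of reduction vectors of `F` with respect to a complete reduction
datum `x`: those `r ∈ ℕˢ` with `J·F(n) = F(n+e)` for all `n ≥ r`. -/
def redSet (F : AdmissibleFiltration R s I) (x : Fin s → Fin d → R) :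
    Set (Fin s → ℤ) :=
  {r | 0 ≤ r ∧ ∀ n : Fin s → ℤ, r ≤ n → crIdeal x * F.F n = F.F (n + evec s)}

/-- The complete reduction number `r_A(F)`: the least `k ∈ ℕ` such that
`J·F(n) = F(n+e)` for all `n ≥ ke`. -/
noncomputable def crNumber (F : AdmissibleFiltration R s I) (x : Fin s → Fin d → R) : ℕ :=
  sInf {k : ℕ | ∀ n : Fin s → ℤ, (∀ i, (k : ℤ) ≤ n i) →
    crIdeal x * F.F n = F.F (n + evec s)}

end PostulationReduction

/-! ### Lengths -/

lemma lenI_eq_length (R M : Type*) [CommRing R] [AddCommGroup M] [Module R M] :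
    lenI R M = ((Module.length R M).toNat : ℤ) := by
  unfold lenI
  rw [← Module.coe_length]
  rfl

lemma length_quot_ne_top {R : Type*} [CommRing R] [IsLocalRing R] [IsNoetherianRing R]
    (A : Ideal R) (hA : maximalIdeal R ≤ A.radical) : Module.length R (R ⧸ A) ≠ ⊤ := by
  by_cases h : A = ⊤
  · subst h
    have : Subsingleton (R ⧸ (⊤ : Ideal R)) := Ideal.Quotient.subsingleton_iff.mpr rfl
    rw [Module.length_eq_zero]; simp
  · have hp : maximalIdeal R ∈ A.minimalPrimes := by
      refine ⟨⟨inferInstance, le_maximalIdeal h⟩, ?_⟩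
      rintro q ⟨hq, hAq⟩ _
      exact hA.trans (hq.radical_le_iff.mpr hAq)
    have := IsLocalRing.quotient_artinian_of_mem_minimalPrimes_of_isLocalRing A hp
    rw [Module.length_eq_of_surjective (R := R ⧸ A) (S := R) (M := R ⧸ A)
      Ideal.Quotient.mk_surjective]
    exact Module.length_ne_top

lemma length_koszul {R : Type*} [CommRing R] (a b : R) (A B C D : Ideal R)
    (hsyz : ∀ p q : R, a * p + b * q = 0 → ∃ t, p = b * t ∧ q = - (a * t))
    (hD : D = Ideal.span {a} * A ⊔ Ideal.span {b} * B)
    (hC : ∀ t, t ∈ C ↔ b * t ∈ A ∧ a * t ∈ B) :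
    Module.length R (R ⧸ D) + Module.length R (R ⧸ C) =
      Module.length R (R ⧸ (Ideal.span {a, b} : Ideal R)) + 
        (Module.length R (R ⧸ A) + Module.length R (R ⧸ B)) := by
  have memD : ∀ z, z ∈ D ↔ ∃ p ∈ A, ∃ q ∈ B, a * p + b * q = z := by
    intro z
    rw [hD, Submodule.mem_sup]
    simp only [Ideal.mem_span_singleton_mul]
    constructor
    · rintro ⟨_, ⟨p, hp, rfl⟩, _, ⟨q, hq, rfl⟩, rfl⟩
      exact ⟨p, hp, q, hq, rfl⟩
    · rintro ⟨p, hp, q, hq, rfl⟩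
      exact ⟨_, ⟨p, hp, rfl⟩, _, ⟨q, hq, rfl⟩, rfl⟩
  let f0 : R →ₗ[R] (R ⧸ A) × (R ⧸ B) :=
    LinearMap.prod (A.mkQ ∘ₗ LinearMap.mulLeft R b) (B.mkQ ∘ₗ LinearMap.mulLeft R (-a))
  have hker : LinearMap.ker f0 = C := by
    ext t
    rw [hC, LinearMap.mem_ker]
    simp [f0, Prod.ext_iff, Submodule.Quotient.mk_eq_zero, -Ideal.Quotient.mk_eq_mk]
  let f : (R ⧸ C) →ₗ[R] (R ⧸ A) × (R ⧸ B) := C.liftQ f0 hker.ge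
  have hf : Function.Injective f := by
    rw [← LinearMap.ker_eq_bot]
    exact Submodule.ker_liftQ_eq_bot _ _ _ hker.le
  have hA : A ≤ LinearMap.ker (D.mkQ ∘ₗ LinearMap.mulLeft R a) := by
    intro p hp
    have : a * p ∈ D := (memD _).2 ⟨p, hp, 0, B.zero_mem, by simp⟩
    simpa [Submodule.Quotient.mk_eq_zero, -Ideal.Quotient.mk_eq_mk, LinearMap.mem_ker] using this
  have hB : B ≤ LinearMap.ker (D.mkQ ∘ₗ LinearMap.mulLeft R b) := by
    intro p hp
    have : b * p ∈ D := (memD _).2 ⟨0, A.zero_mem, p, hp, by simp⟩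
    simpa [Submodule.Quotient.mk_eq_zero, -Ideal.Quotient.mk_eq_mk, LinearMap.mem_ker] using this
  let h : (R ⧸ A) × (R ⧸ B) →ₗ[R] R ⧸ D :=
    LinearMap.coprod (A.liftQ _ hA) (B.liftQ _ hB)
  have hmk : ∀ p q : R, h (A.mkQ p, B.mkQ q) = D.mkQ (a * p + b * q) := by
    intro p q
    simp only [h, LinearMap.coprod_apply, Submodule.mkQ_apply, Submodule.liftQ_apply, 
      LinearMap.comp_apply, LinearMap.mulLeft_apply, Submodule.Quotient.mk_add]
  have hfmk : ∀ t : R, f (C.mkQ t) = (A.mkQ (b * t), B.mkQ (-a * t)) := by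
    intro t; rfl
  have hex1 : Function.Exact f h.rangeRestrict := by
    rintro ⟨p, q⟩
    obtain ⟨p, rfl⟩ := A.mkQ_surjective p
    obtain ⟨q, rfl⟩ := B.mkQ_surjective q
    rw [← Submodule.coe_eq_zero]
    change h (A.mkQ p, B.mkQ q) = 0 ↔ _
    rw [hmk, Submodule.mkQ_apply,
      Submodule.Quotient.mk_eq_zero, memD]
    constructor
    · rintro ⟨p', hp', q', hq', heq⟩
      obtain ⟨t, h1, h2⟩ := hsyz (p - p') (q - q') (by linear_combination -heq)
      refine ⟨C.mkQ t, ?_⟩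
      rw [hfmk]
      refine Prod.ext ?_ ?_
      · refine (Submodule.Quotient.eq A).2 ?_
        rw [← h1]; simpa using hp'
      · refine (Submodule.Quotient.eq B).2 ?_
        rw [neg_mul, ← h2]; simpa using hq'
    · rintro ⟨t, ht⟩
      obtain ⟨t, rfl⟩ := C.mkQ_surjective t
      rw [hfmk, Prod.ext_iff] at ht
      have h1 := (Submodule.Quotient.eq A).1 ht.1
      have h2 := (Submodule.Quotient.eq B).1 ht.2
      refine ⟨_, A.neg_mem h1, _, B.neg_mem h2, ?_⟩
      ring
  have e1 := Module.length_eq_add_of_exact f h.rangeRestrict hf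
    (LinearMap.surjective_rangeRestrict h) hex1
  have hDle : D ≤ Ideal.span {a, b} := by
    intro z hz
    obtain ⟨p, -, q, -, rfl⟩ := (memD z).1 hz
    exact Ideal.mem_span_pair.2 ⟨p, q, by ring⟩
  let g : (R ⧸ D) →ₗ[R] R ⧸ (Ideal.span {a, b} : Ideal R) := Submodule.factor hDle
  have hg : Function.Surjective g := Submodule.factor_surjective hDle
  have hex2 : Function.Exact (LinearMap.range h).subtype g := by
    intro z
    obtain ⟨z, rfl⟩ := D.mkQ_surjective z
    have : g (D.mkQ z) = (Ideal.span {a, b} : Ideal R).mkQ z := rfl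
    rw [this, Submodule.mkQ_apply, Submodule.Quotient.mk_eq_zero, Ideal.mem_span_pair]
    simp only [Submodule.coe_subtype, Subtype.range_coe_subtype, LinearMap.mem_range]
    constructor
    · rintro ⟨p, q, rfl⟩
      exact ⟨(A.mkQ p, B.mkQ q), by rw [hmk, mul_comm a, mul_comm b]⟩
    · rintro ⟨⟨p, q⟩, hpq⟩
      obtain ⟨p, rfl⟩ := A.mkQ_surjective p
      obtain ⟨q, rfl⟩ := B.mkQ_surjective q
      rw [hmk] at hpq
      obtain ⟨p', -, q', -, heq⟩ := (memD _).1 ((Submodule.Quotient.eq D).1 hpq)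
      exact ⟨p - p', q - q', by linear_combination -heq⟩
  have e2 := Module.length_eq_add_of_exact (LinearMap.range h).subtype g
    (Submodule.injective_subtype _) hg hex2
  rw [Module.length_prod] at e1
  rw [e2, e1]
  ac_rfl

/-! ### Regular sequences -/

lemma regular_pair_pow {R : Type*} [CommRing R] (u v : R)
    (hu : ∀ z, u * z = 0 → z = 0) (hv : ∀ z w, v * z = u * w → ∃ t, z = u * t) (k l : ℕ) :
    (∀ z, u ^ k * z = 0 → z = 0) ∧ (∀ z w, v ^ l * z = u ^ k * w → ∃ t, z = u ^ k * t) := by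
  have h1 : ∀ k : ℕ, ∀ z, u ^ k * z = 0 → z = 0 := by
    intro k
    induction k with
    | zero => intro z hz; simpa using hz
    | succ k ih => 
      intro z hz
      exact ih z (hu _ (by rw [← hz]; ring))
  have h2 : ∀ l : ℕ, ∀ z w, v ^ l * z = u * w → ∃ t, z = u * t := by
    intro l
    induction l with
    | zero => intro z w hz; exact ⟨w, by simpa using hz⟩
    | succ l ih =>
      intro z w hz
      obtain ⟨t, ht⟩ := hv (v ^ l * z) w (by rw [← hz]; ring)
      exact ih z t ht
  refine ⟨h1 k, ?_⟩
  induction k with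
  | zero => intro z w _; exact ⟨z, by simp⟩
  | succ k ih =>
    intro z w hz
    obtain ⟨z', rfl⟩ := h2 l z (u ^ k * w) (by rw [hz]; ring)
    obtain ⟨t, rfl⟩ := ih z' w (by
      have := hu (v ^ l * z' - u ^ k * w) (by linear_combination hz)
      linear_combination this)
    exact ⟨t, by ring⟩

lemma syzygy_of_cm {R : Type*} [CommRing R] [IsLocalRing R] 
    (hdim : ringKrullDim R = 2) (hCM : IsCMLocal R) (a b : R)
    (hab : maximalIdeal R ≤ (Ideal.span {a, b}).radical) :
    ∀ p q : R, a * p + b * q = 0 → ∃ t, p = b * t ∧ q = - (a * t) := by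
  obtain ⟨rs, hmem, hreg, hlen⟩ := hCM
  rw [hdim] at hlen
  have hlen2 : rs.length = 2 := by exact_mod_cast hlen
  obtain ⟨u, v, rfl⟩ := List.length_eq_two.1 hlen2
  have hw := hreg.toIsWeaklyRegular
  rw [RingTheory.Sequence.isWeaklyRegular_cons_iff,
    RingTheory.Sequence.isWeaklyRegular_singleton_iff] at hw
  obtain ⟨hu, hv⟩ := hw
  have hu' : ∀ z, u * z = 0 → z = 0 := by
    intro z hz
    exact hu (by simpa using hz)
  have hv' : ∀ z w, v * z = u * w → ∃ t, z = u * t := by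
    intro z w hz
    rw [isSMulRegular_iff_right_eq_zero_of_smul] at hv
    have := hv (Submodule.Quotient.mk z) (by
      rw [← Submodule.Quotient.mk_smul, Submodule.Quotient.mk_eq_zero, smul_eq_mul, hz]
      exact Submodule.smul_mem_pointwise_smul w u ⊤ trivial)
    rw [Submodule.Quotient.mk_eq_zero] at this
    obtain ⟨t, -, ht⟩ := (Submodule.mem_smul_pointwise_iff_exists _ _ _).1 this
    exact ⟨t, ht.symm⟩
  obtain ⟨k, hk⟩ := hab (hmem u (by simp))
  obtain ⟨l, hl⟩ := hab (hmem v (by simp))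
  obtain ⟨ru, rv⟩ := regular_pair_pow u v hu' hv' k l
  obtain ⟨u1, u2, hu12⟩ := Ideal.mem_span_pair.1 hk
  obtain ⟨v1, v2, hv12⟩ := Ideal.mem_span_pair.1 hl
  have hann : ∀ z, a * z = 0 → b * z = 0 → z = 0 := by
    intro z h1 h2
    apply ru
    rw [← hu12]
    linear_combination u1 * h1 + u2 * h2
  intro p q hpq
  -- `u^k (p,q) = P (b,-a)`, `v^l (p,q) = Q (b,-a)`
  have hP1 : u ^ k * p = (u2 * p - u1 * q) * b := by rw [← hu12]; linear_combination u1 * hpq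
  have hP2 : u ^ k * q = - ((u2 * p - u1 * q) * a) := by rw [← hu12]; linear_combination u2 * hpq
  have hQ1 : v ^ l * p = (v2 * p - v1 * q) * b := by rw [← hv12]; linear_combination v1 * hpq
  have hQ2 : v ^ l * q = - ((v2 * p - v1 * q) * a) := by rw [← hv12]; linear_combination v2 * hpq
  have hz : v ^ l * (u2 * p - u1 * q) - u ^ k * (v2 * p - v1 * q) = 0 := by
    apply hann
    · linear_combination v ^ l * hP2 - u ^ k * hQ2
    · linear_combination v ^ l * (-hP1) + u ^ k * hQ1
  obtain ⟨t, ht⟩ := rv _ _ (sub_eq_zero.1 hz)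
  refine ⟨t, ?_, ?_⟩
  · rw [← sub_eq_zero]
    apply ru
    rw [ht] at hP1
    linear_combination hP1
  · rw [← sub_eq_zero]
    apply ru
    rw [ht] at hP2
    linear_combination hP2

/-! ### Polynomial functions of bounded degree via finite differences -/

/-- `DegLT k f`: all `k`-fold finite differences of `f` vanish. -/
def DegLT {s : ℕ} : ℕ → ((Fin s → ℤ) → ℤ) → Prop
  | 0, f => ∀ n, f n = 0
  | k + 1, f => ∀ v, DegLT k (fun n => f (n + v) - f n)

lemma DegLT.zero {s : ℕ} (k : ℕ) : DegLT k (fun _ : Fin s → ℤ => 0) := by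
  induction k with
  | zero => intro n; rfl
  | succ k ih => intro v; simpa using ih

lemma DegLT.mono {s : ℕ} {k l : ℕ} (h : k ≤ l) {f : (Fin s → ℤ) → ℤ} (hf : DegLT k f) :
    DegLT l f := by
  induction l generalizing k f with
  | zero => obtain rfl : k = 0 := by omega
            exact hf
  | succ l ih =>
    cases k with
    | zero => 
      obtain rfl : f = fun _ => 0 := funext hf
      exact DegLT.zero _
    | succ k => intro v; exact ih (by omega) (hf v)

lemma DegLT.add {s : ℕ} {k : ℕ} {f g : (Fin s → ℤ) → ℤ} (hf : DegLT k f) (hg : DegLT k g) :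
    DegLT k (fun n => f n + g n) := by
  induction k generalizing f g with
  | zero => intro n; simp [hf n, hg n]
  | succ k ih =>
    intro v
    have := ih (hf v) (hg v)
    convert this using 2
    ring

lemma DegLT.shift {s : ℕ} {k : ℕ} {f : (Fin s → ℤ) → ℤ} (hf : DegLT k f) (w : Fin s → ℤ) :
    DegLT k (fun n => f (n + w)) := by
  induction k generalizing f with
  | zero => intro n; exact hf _
  | succ k ih =>
    intro v
    have := ih (hf v)
    convert this using 4
    abel

lemma DegLT.mul {s : ℕ} {a b c : ℕ} (h : a + b ≤ c + 1) {f g : (Fin s → ℤ) → ℤ} 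
    (hf : DegLT a f) (hg : DegLT b g) : DegLT c (fun n => f n * g n) := by
  induction c generalizing a b f g with
  | zero =>
    intro n
    cases a with
    | zero => simp [hf n]
    | succ a =>
      obtain rfl : b = 0 := by omega
      simp [hg n]
  | succ c ih =>
    cases a with
    | zero =>
      obtain rfl : f = fun _ => 0 := funext hf
      simpa using DegLT.zero (c + 1)
    | succ a =>
      cases b with
      | zero => 
        obtain rfl : g = fun _ => 0 := funext hg
        simpa using DegLT.zero (c + 1)
      | succ b =>
        intro v
        have h1 := ih (a := a) (b := b + 1) (by omega) (hf v) (hg.shift v)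
        have h2 := ih (a := a + 1) (b := b) (by omega) hf (hg v)
        convert h1.add h2 using 2
        ring

lemma DegLT.const {s : ℕ} (z : ℤ) : DegLT 1 (fun _ : Fin s → ℤ => z) := by
  intro v n; simp

lemma DegLT.sum {s : ℕ} {k : ℕ} {ι : Type*} (S : Finset ι) (f : ι → (Fin s → ℤ) → ℤ)
    (hf : ∀ i ∈ S, DegLT k (f i)) : DegLT k (fun n => ∑ i ∈ S, f i n) := by
  classical
  induction S using Finset.induction_on with
  | empty => simpa using DegLT.zero k
  | insert i S hi ih =>
    simp only [Finset.sum_insert hi]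
    exact (hf i (by simp)).add (ih fun j hj => hf j (by simp [hj]))

lemma DegLT.prod {s : ℕ} {ι : Type*} (S : Finset ι) (f : ι → (Fin s → ℤ) → ℤ) (a : ι → ℕ)
    (hf : ∀ i ∈ S, DegLT (a i + 1) (f i)) : 
    DegLT (∑ i ∈ S, a i + 1) (fun n => ∏ i ∈ S, f i n) := by
  classical
  induction S using Finset.induction_on with
  | empty => simpa using DegLT.const 1
  | insert i S hi ih =>
    simp only [Finset.prod_insert hi, Finset.sum_insert hi]
    exact DegLT.mul (by omega) (hf i (by simp)) (ih fun j hj => hf j (by simp [hj]))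

lemma two_choose (t : ℤ) : 2 * Ring.choose (t + 1) 2 = t * (t + 1) := by
  have := Ring.choose_smul_choose (t + 1) (n := 2) (k := 1) (by norm_num)
  simp at this
  linarith

lemma degLT_choose {s : ℕ} (i : Fin s) (k : ℕ) (hk : k ≤ 2) :
    DegLT (k + 1) (fun n : Fin s → ℤ => Ring.choose (n i + (k : ℤ) - 1) k) := by
  interval_cases k
  · simpa using DegLT.const 1
  · intro u v n
    simp
  · intro u v w n
    have e : ∀ t : ℤ, t + ((2 : ℕ) : ℤ) - 1 = t + 1 := fun t => by push_cast; ring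
    simp only [e, Pi.add_apply]
    have := two_choose
    have h2 : ∀ t : ℤ, t = 0 ↔ 2 * t = 0 := fun t => by omega
    rw [h2]
    simp only [mul_sub, this]
    ring

lemma degLT_hilbPoly (s : ℕ) (c : (Fin s → ℕ) → ℤ) : DegLT 3 (hilbPoly s 2 c) := by
  unfold hilbPoly
  refine DegLT.sum _ _ fun α hα => ?_
  simp only [Finset.mem_filter, Finset.mem_univ, true_and] at hα
  have h1 := DegLT.prod Finset.univ 
    (fun i (n : Fin s → ℤ) => Ring.choose (n i + ((α i : ℕ) : ℤ) - 1) (α i : ℕ)) 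
    (fun i => (α i : ℕ)) (fun i _ => degLT_choose i _ (by omega))
  exact DegLT.mul (a := 1) (b := 3) (by omega) (DegLT.const _) (h1.mono (by omega))

lemma hilbPoly_diff_const (s : ℕ) (c : (Fin s → ℕ) → ℤ) (u v n m : Fin s → ℤ) :
    hilbPoly s 2 c (n + u + v) - hilbPoly s 2 c (n + u) - hilbPoly s 2 c (n + v) 
      + hilbPoly s 2 c n =
    hilbPoly s 2 c (m + u + v) - hilbPoly s 2 c (m + u) - hilbPoly s 2 c (m + v) 
      + hilbPoly s 2 c m := by
  have := degLT_hilbPoly s c v u (m - n) n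
  simp only at this
  rw [show n + (m - n) = m by abel] at this
  linear_combination -this

/-! ### Consequences for admissible filtrations -/

lemma koszul_int {R : Type*} [CommRing R] [IsLocalRing R] [IsNoetherianRing R]
    (a b : R) (A B C D : Ideal R)
    (hsyz : ∀ p q : R, a * p + b * q = 0 → ∃ t, p = b * t ∧ q = - (a * t))
    (hD : D = Ideal.span {a} * A ⊔ Ideal.span {b} * B)
    (hC : ∀ t, t ∈ C ↔ b * t ∈ A ∧ a * t ∈ B)
    (hA : maximalIdeal R ≤ A.radical) (hB : maximalIdeal R ≤ B.radical)
    (hab : maximalIdeal R ≤ (Ideal.span {a, b}).radical) :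
    Module.length R (R ⧸ D) ≠ ⊤ ∧
    lenI R (R ⧸ D) + lenI R (R ⧸ C) =
      lenI R (R ⧸ (Ideal.span {a, b} : Ideal R)) + (lenI R (R ⧸ A) + lenI R (R ⧸ B)) := by
  have h := length_koszul a b A B C D hsyz hD hC
  have hA' := length_quot_ne_top A hA
  have hB' := length_quot_ne_top B hB
  have hab' := length_quot_ne_top _ hab
  simp only [lenI_eq_length]
  obtain ⟨α, hα⟩ := ENat.ne_top_iff_exists.1 hA'
  obtain ⟨β, hβ⟩ := ENat.ne_top_iff_exists.1 hB'
  obtain ⟨γ, hγ⟩ := ENat.ne_top_iff_exists.1 hab'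
  rw [← hα, ← hβ, ← hγ] at h ⊢
  have hD' : Module.length R (R ⧸ D) ≠ ⊤ := by
    intro h'
    rw [h', top_add] at h
    exact absurd h.symm (by exact_mod_cast ENat.natCast_ne_top (γ + (α + β)))
  have hC' : Module.length R (R ⧸ C) ≠ ⊤ := by
    intro h'
    rw [h', add_top] at h
    exact absurd h.symm (by exact_mod_cast ENat.natCast_ne_top (γ + (α + β)))
  refine ⟨hD', ?_⟩
  obtain ⟨δ, hδ⟩ := ENat.ne_top_iff_exists.1 hD'
  obtain ⟨ε, hε⟩ := ENat.ne_top_iff_exists.1 hC'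
  rw [← hδ, ← hε] at h ⊢
  simp only [ENat.toNat_natCast]
  exact_mod_cast h

lemma eq_of_lenI_eq {R : Type*} [CommRing R] {D E : Ideal R} (hDE : D ≤ E)
    (hfin : Module.length R (R ⧸ D) ≠ ⊤) (h : lenI R (R ⧸ D) = lenI R (R ⧸ E)) : D = E := by
  let g : (R ⧸ D) →ₗ[R] R ⧸ E := Submodule.factor hDE
  have hg : Function.Surjective g := Submodule.factor_surjective hDE
  have e := Module.length_eq_add_of_exact (LinearMap.ker g).subtype g
    (Submodule.injective_subtype _) hg (LinearMap.exact_subtype_ker_map g)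
  have hE : Module.length R (R ⧸ E) ≠ ⊤ := fun h' => hfin (by rw [e, h', add_top])
  have hK : Module.length R (LinearMap.ker g) ≠ ⊤ := fun h' => hfin (by rw [e, h', top_add])
  simp only [lenI_eq_length] at h
  obtain ⟨δ, hδ⟩ := ENat.ne_top_iff_exists.1 hfin
  obtain ⟨ε, hε⟩ := ENat.ne_top_iff_exists.1 hE
  obtain ⟨κ, hκ⟩ := ENat.ne_top_iff_exists.1 hK
  rw [← hδ, ← hε] at h
  rw [← hδ, ← hε, ← hκ] at e
  simp only [ENat.toNat_natCast] at h
  have hk0 : κ = 0 := by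
    have : δ = κ + ε := by exact_mod_cast e
    omega
  rw [hk0] at hκ
  have hsub : Subsingleton (LinearMap.ker g) := Module.length_eq_zero_iff.1 (by rw [← hκ]; rfl)
  refine le_antisymm hDE fun z hz => ?_
  have hz' : D.mkQ z ∈ LinearMap.ker g := by
    rw [LinearMap.mem_ker]
    change E.mkQ z = 0
    simpa [Submodule.Quotient.mk_eq_zero, -Ideal.Quotient.mk_eq_mk] using hz
  have := congrArg Subtype.val (Subsingleton.elim (⟨D.mkQ z, hz'⟩ : LinearMap.ker g) 0)
  exact (Submodule.Quotient.mk_eq_zero D).1 this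

lemma lenI_anti {R : Type*} [CommRing R] {D E : Ideal R} (hDE : D ≤ E)
    (hfin : Module.length R (R ⧸ D) ≠ ⊤) : lenI R (R ⧸ E) ≤ lenI R (R ⧸ D) := by
  simp only [lenI_eq_length]
  have := Module.length_le_of_surjective (Submodule.factor hDE) (Submodule.factor_surjective hDE)
  exact_mod_cast ENat.toNat_le_toNat this hfin

lemma le_radical_prodPow {R : Type*} [CommRing R] [IsLocalRing R] {s : ℕ}
    {I : Fin s → Ideal R} (hI : ∀ i, IsMPrimary R (I i)) (n : Fin s → ℤ) :
    maximalIdeal R ≤ (prodPow I n).radical := by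
  unfold prodPow
  induction (Finset.univ : Finset (Fin s)) using Finset.induction_on with
  | empty => simp [Ideal.radical_top, Ideal.one_eq_top]
  | insert i S hi ih =>
    rw [Finset.prod_insert hi, Ideal.radical_mul]
    refine le_inf ?_ ih
    by_cases h : (n i).toNat = 0
    · simp [h, Ideal.radical_top, Ideal.one_eq_top]
    · rw [Ideal.radical_pow _ h]
      exact (hI i).2

section filt

variable {R : Type*} [CommRing R] {s : ℕ} {I : Fin s → Ideal R}

lemma filt_le_radical [IsLocalRing R] (hI : ∀ i, IsMPrimary R (I i))
    (F : AdmissibleFiltration R s I) (n : Fin s → ℤ) :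
    maximalIdeal R ≤ (F.F n).radical :=
  (le_radical_prodPow hI n).trans (Ideal.radical_mono (F.prodPow_le n))

lemma mul_mem_filt (F : AdmissibleFiltration R s I) {m n k : Fin s → ℤ} (h : m + n = k) {a b : R} 
    (ha : a ∈ F.F m) (hb : b ∈ F.F n) : a * b ∈ F.F k :=
  h ▸ F.mul_le m n (Ideal.mul_mem_mul ha hb)

lemma prod_mem_filt (F : AdmissibleFiltration R s I) (x : Fin s → R) (hx : ∀ i, x i ∈ I i) :
    ∏ i, x i ∈ F.F (evec s) := by
  refine F.prodPow_le _ (Ideal.prod_mem_prod fun i _ => ?_)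
  simpa [evec] using hx i

lemma single_mem_filt (F : AdmissibleFiltration R s I) (i : Fin s) (z : R) (hz : z ∈ I i) :
    z ∈ F.F (Pi.single i 1) := by
  refine F.prodPow_le _ ?_
  have : prodPow I (Pi.single i 1) = I i := by
    unfold prodPow
    rw [Finset.prod_eq_single i]
    · simp
    · intro j _ hj; simp [hj]
    · simp
  rwa [this]

lemma prod_factor (F : AdmissibleFiltration R s I) (x : Fin s → R) (hx : ∀ i, x i ∈ I i)
    (i : Fin s) : ∃ w ∈ F.F (evec s - Pi.single i 1), ∏ k, x k = x i * w := by
  refine ⟨∏ k, (if k = i then 1 else x k), 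
    F.prodPow_le _ (Ideal.prod_mem_prod fun k _ => ?_), ?_⟩
  · by_cases h : k = i
    · subst h; simp [evec]
    · simpa [evec, h] using hx k
  · rw [← Finset.mul_prod_erase Finset.univ x (Finset.mem_univ i),
      ← Finset.mul_prod_erase Finset.univ (fun k => if k = i then 1 else x k) (Finset.mem_univ i)]
    simp only [if_true, one_mul]
    congr 1
    refine Finset.prod_congr rfl fun k hk => ?_
    simp [Finset.ne_of_mem_erase hk]

lemma crIdeal_two (x : Fin s → Fin 2 → R) :
    crIdeal x = Ideal.span {∏ i, x i 0, ∏ i, x i 1} := by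
  unfold crIdeal
  congr 1
  ext z
  simp [Fin.exists_fin_two, eq_comm]

lemma crIdeal_mul (x : Fin s → Fin 2 → R) (A : Ideal R) :
    crIdeal x * A = Ideal.span {∏ i, x i 0} * A ⊔ Ideal.span {∏ i, x i 1} * A := by
  rw [crIdeal_two, Ideal.span_insert, Ideal.sup_mul]

lemma pow_le_filt (F : AdmissibleFiltration R s I) (k : ℕ) :
    F.F (evec s) ^ (k + 1) ≤ F.F ((k + 1) • evec s) := by
  induction k with
  | zero => simp
  | succ k ih =>
    rw [pow_succ, succ_nsmul]
    exact (Ideal.mul_mono_left ih).trans (F.mul_le _ _)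

lemma crIdeal_le (F : AdmissibleFiltration R s I) (x : Fin s → Fin 2 → R)
    (hx : ∀ i j, x i j ∈ I i) : crIdeal x ≤ F.F (evec s) := by
  unfold crIdeal
  rw [Ideal.span_le]
  rintro _ ⟨j, rfl⟩
  exact prod_mem_filt F (fun i => x i j) fun i => hx i j

lemma colon_filt (F : AdmissibleFiltration R s I) (x : Fin s → Fin 2 → R)
    (hx : IsCompleteReduction F x) (hvanish : H1ReesVanishes F) (m : Fin s → ℤ) (hm : 0 ≤ m)
    (t : R) : t ∈ F.F m ↔ 
      (∏ i, x i 1) * t ∈ F.F (m + evec s) ∧ (∏ i, x i 0) * t ∈ F.F (m + evec s) := by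
  obtain ⟨hxI, N, hN⟩ := hx
  constructor
  · intro ht
    exact ⟨mul_mem_filt F (add_comm _ _) (prod_mem_filt F (fun i => x i 1) fun i => hxI i 1) ht,
      mul_mem_filt F (add_comm _ _) (prod_mem_filt F (fun i => x i 0) fun i => hxI i 0) ht⟩
  · rintro ⟨h1, h0⟩
    rw [← hvanish m hm]
    unfold ratliffRush
    refine (le_iSup (fun k : ℕ => (F.F (m + ((k + 1) : ℕ) • evec s)).colon
      ((F.F (evec s) ^ (k + 1) : Ideal R) : Set R)) N) ?_
    rw [Submodule.mem_colon]
    intro z hz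
    have hz' : z ∈ F.F ((N + 1) • evec s) := pow_le_filt F N hz
    rw [succ_nsmul, ← hN (N • evec s) (fun i => by simp [evec]), crIdeal_mul,
      Submodule.mem_sup] at hz'
    simp only [Ideal.mem_span_singleton_mul] at hz'
    obtain ⟨_, ⟨p, hp, rfl⟩, _, ⟨q, hq, rfl⟩, rfl⟩ := hz'
    have e : m + evec s + N • evec s = m + (N + 1) • evec s := by rw [succ_nsmul]; abel
    have := Ideal.add_mem _ (mul_mem_filt F e h0 hp) (mul_mem_filt F e h1 hq)
    convert this using 1
    rw [smul_eq_mul]; ring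

lemma crIdeal_radical [IsLocalRing R] (hI : ∀ i, IsMPrimary R (I i))
    (F : AdmissibleFiltration R s I) (x : Fin s → Fin 2 → R)
    (hx : IsCompleteReduction F x) : maximalIdeal R ≤ (crIdeal x).radical := by
  obtain ⟨hxI, N, hN⟩ := hx
  refine (filt_le_radical hI F (N • evec s + evec s)).trans (Ideal.radical_mono ?_)
  rw [← hN (N • evec s) (fun i => by simp [evec])]
  exact Ideal.mul_le_left (I := crIdeal x) (J := F.F (N • evec s))

/-- `λ(R/J F(m+e)) + H(m) = λ(R/J) + 2 H(m+e)`. -/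
lemma key_len [IsLocalRing R] [IsNoetherianRing R] 
    (hdim : ringKrullDim R = 2) (hCM : IsCMLocal R) (hI : ∀ i, IsMPrimary R (I i))
    (F : AdmissibleFiltration R s I) (x : Fin s → Fin 2 → R)
    (hx : IsCompleteReduction F x) (hvanish : H1ReesVanishes F) (m : Fin s → ℤ) (hm : 0 ≤ m) :
    crIdeal x * F.F (m + evec s) = F.F (m + evec s + evec s) ↔
      hilbFn F (m + evec s + evec s) + hilbFn F m = 
        lenI R (R ⧸ crIdeal x) + 2 * hilbFn F (m + evec s) := by
  have hr := crIdeal_radical hI F x hx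
  have hr' := hr
  rw [crIdeal_two] at hr'
  obtain ⟨hfin, hlen⟩ := koszul_int (∏ i, x i 0) (∏ i, x i 1) (F.F (m + evec s)) (F.F (m + evec s)) 
    (F.F m) (crIdeal x * F.F (m + evec s)) (syzygy_of_cm hdim hCM _ _ hr') (crIdeal_mul _ _)
    (colon_filt F x hx hvanish m hm) (filt_le_radical hI F _) (filt_le_radical hI F _) hr'
  rw [← crIdeal_two] at hlen
  unfold hilbFn
  constructor
  · intro h
    rw [← h]
    linarith
  · intro h
    refine eq_of_lenI_eq ?_ hfin (by linarith)
    calc _ ≤ F.F (evec s) * F.F (m + evec s) := Ideal.mul_mono_left (crIdeal_le F x hx.1)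
      _ ≤ _ := by rw [add_comm (m + evec s)]; exact F.mul_le _ _

lemma mixed_pos [IsLocalRing R] [IsNoetherianRing R] 
    (hdim : ringKrullDim R = 2) (hCM : IsCMLocal R) (hI : ∀ i, IsMPrimary R (I i))
    (F : AdmissibleFiltration R s I) (x : Fin s → Fin 2 → R)
    (hx : IsCompleteReduction F x) (i j : Fin s) :
    ∃ N : ℕ, ∀ m : Fin s → ℤ, (∀ k, (N : ℤ) ≤ m k) → 
      0 < hilbFn F (m + Pi.single i 1 + Pi.single j 1) - hilbFn F (m + Pi.single i 1)
        - hilbFn F (m + Pi.single j 1) + hilbFn F m := by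
  have hr := crIdeal_radical hI F x hx
  obtain ⟨hxI, N, hN⟩ := hx
  obtain ⟨w0, hw0, e0⟩ := prod_factor F (fun k => x k 0) (fun k => hxI k 0) i
  obtain ⟨w1, hw1, e1⟩ := prod_factor F (fun k => x k 1) (fun k => hxI k 1) j
  have ha := single_mem_filt F i (x i 0) (hxI i 0)
  have hb := single_mem_filt F j (x j 1) (hxI j 1)
  have hle : crIdeal x ≤ Ideal.span {x i 0, x j 1} := by
    rw [crIdeal_two, Ideal.span_le]
    intro z hz
    rcases hz with rfl | rfl
    · rw [e0]; exact Ideal.mul_mem_right _ _ (Ideal.subset_span (by simp))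
    · rw [e1]; exact Ideal.mul_mem_right _ _ (Ideal.subset_span (by simp))
  have hrad : maximalIdeal R ≤ (Ideal.span {x i 0, x j 1}).radical :=
    hr.trans (Ideal.radical_mono hle)
  refine ⟨N + 1, fun m hm => ?_⟩
  set ei : Fin s → ℤ := Pi.single i 1 with hei
  set ej : Fin s → ℤ := Pi.single j 1 with hej
  have hnei : 0 ≤ ei := by rw [hei]; exact Pi.single_nonneg.2 zero_le_one
  have hnej : 0 ≤ ej := by rw [hej]; exact Pi.single_nonneg.2 zero_le_one
  have hD : F.F (m + ei + ej) = 
      Ideal.span {x i 0} * F.F (m + ej) ⊔ Ideal.span {x j 1} * F.F (m + ei) := by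
    apply le_antisymm
    · have := hN (m + ei + ej - evec s) (fun k => by
        have h1 := hm k
        have h2 := hnei k
        have h3 := hnej k
        simp only [Pi.add_apply, Pi.sub_apply, Pi.zero_apply, evec] at *
        push_cast at h1
        linarith)
      rw [sub_add_cancel] at this
      rw [← this, crIdeal_mul]
      refine sup_le_sup ?_ ?_
      · intro z hz
        obtain ⟨p, hp, rfl⟩ := Ideal.mem_span_singleton_mul.1 hz
        rw [e0, mul_assoc]
        exact Ideal.mem_span_singleton_mul.2 ⟨_, mul_mem_filt F (by abel) hw0 hp, rfl⟩
      · intro z hz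
        obtain ⟨p, hp, rfl⟩ := Ideal.mem_span_singleton_mul.1 hz
        rw [e1, mul_assoc]
        exact Ideal.mem_span_singleton_mul.2 ⟨_, mul_mem_filt F (by abel) hw1 hp, rfl⟩
    · refine sup_le ?_ ?_
      · intro z hz
        obtain ⟨p, hp, rfl⟩ := Ideal.mem_span_singleton_mul.1 hz
        exact mul_mem_filt F (by abel) ha hp
      · intro z hz
        obtain ⟨p, hp, rfl⟩ := Ideal.mem_span_singleton_mul.1 hz
        exact mul_mem_filt F (by abel) hb hp
  let C : Ideal R := (F.F (m + ej)).colon {x j 1} ⊓ (F.F (m + ei)).colon {x i 0}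
  have hC : ∀ t, t ∈ C ↔ x j 1 * t ∈ F.F (m + ej) ∧ x i 0 * t ∈ F.F (m + ei) := by
    intro t
    simp only [C, Submodule.mem_inf, Submodule.mem_colon_singleton, smul_eq_mul, mul_comm t]
  obtain ⟨-, hlen⟩ := koszul_int (x i 0) (x j 1) (F.F (m + ej)) (F.F (m + ei)) C _
    (syzygy_of_cm hdim hCM _ _ hrad) hD hC (filt_le_radical hI F _) (filt_le_radical hI F _) hrad
  have hCle : lenI R (R ⧸ C) ≤ hilbFn F m := by
    refine lenI_anti ?_ (length_quot_ne_top _ (filt_le_radical hI F _))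
    intro t ht
    exact (hC t).2 ⟨mul_mem_filt F (add_comm _ _) hb ht, mul_mem_filt F (add_comm _ _) ha ht⟩
  have hpos : 0 < lenI R (R ⧸ (Ideal.span {x i 0, x j 1} : Ideal R)) := by
    rw [lenI_eq_length]
    have hne : (Ideal.span {x i 0, x j 1} : Ideal R) ≠ ⊤ := by
      intro h
      have : (Ideal.span {x i 0, x j 1} : Ideal R) ≤ maximalIdeal R := by
        rw [Ideal.span_le]
        intro z hz
        rcases hz with rfl | rfl
        · exact le_maximalIdeal (hI i).1 (hxI i 0)
        · exact le_maximalIdeal (hI j).1 (hxI j 1)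
      rw [h] at this
      exact (maximalIdeal.isMaximal R).ne_top (top_le_iff.1 this)
    have := Ideal.Quotient.nontrivial_iff.2 hne
    have h1 : 0 < Module.length R (R ⧸ (Ideal.span {x i 0, x j 1} : Ideal R)) := Module.length_pos
    have h2 := length_quot_ne_top _ hrad
    obtain ⟨γ, hγ⟩ := ENat.ne_top_iff_exists.1 h2
    rw [← hγ] at h1 ⊢
    simpa using h1
  unfold hilbFn at hCle ⊢
  linarith

end filt

/-- STATEMENT 17: Let `(R,m)` be Cohen–Macaulay local of dimension two with infinite
residue field, `I₁,…,I_s` `m`-primary with `s ≥ 2`, `F` an `I`-admissible filtration,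
`A` a good complete reduction of `F`, and suppose `H¹_{R₊₊}(R(F))_n = 0` for all `n ≥ 0`
(by Proposition 4.1 of the paper this is the condition `F̆(n) = F(n)` for all `n ≥ 0`).
Then `P(F) ⊆ ℕˢ` and `f(n) = n + e` is a one-to-one correspondence between `P(F)` and
`{r ∈ R_A(F) : r ≥ e}`, with inverse `r ↦ r − e`. -/
theorem postulation_reduction_correspondence_dim_two
    (R : Type*) [CommRing R] [IsLocalRing R] [IsNoetherianRing R]
    [Infinite (IsLocalRing.ResidueField R)]
    (s : ℕ) (hs : 2 ≤ s) (hdim : ringKrullDim R = 2) (hCM : IsCMLocal R)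
    (I : Fin s → Ideal R) (hI : ∀ i, IsMPrimary R (I i))
    (F : AdmissibleFiltration R s I)
    (c : (Fin s → ℕ) → ℤ) (hc : IsHilbCoeffs F 2 c)
    (x : Fin s → Fin 2 → R) (hx : IsGoodCompleteReduction F x)
    (hvanish : H1ReesVanishes F) :
    postSet F 2 c ⊆ {n | 0 ≤ n}
    ∧ (∀ n ∈ postSet F 2 c, n + evec s ∈ redSet F x ∧ evec s ≤ n + evec s)
    ∧ (∀ r ∈ redSet F x, evec s ≤ r → r - evec s ∈ postSet F 2 c) := by
  have hcr := hx.1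
  obtain ⟨N, hN⟩ := hc
  -- the constant second difference of the Hilbert polynomial
  have hP : ∀ n : Fin s → ℤ, hilbPoly s 2 c (n + evec s + evec s) + hilbPoly s 2 c n =
      lenI R (R ⧸ crIdeal x) + 2 * hilbPoly s 2 c (n + evec s) := by
    intro n
    obtain ⟨M, hM⟩ := hcr.2
    set m : Fin s → ℤ := fun _ => ((N + M : ℕ) : ℤ) with hm
    have h1 := (key_len hdim hCM hI F x hcr hvanish m (fun i => by simp [hm]; positivity)).1
      (hM _ (fun i => by simp [hm, evec]; linarith))
    rw [← hN _ (fun i => by simp [hm, evec]; linarith),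
      ← hN _ (fun i => by simp [hm]), ← hN _ (fun i => by simp [hm, evec]; linarith)] at h1
    have h2 := hilbPoly_diff_const s c (evec s) (evec s) n m
    linarith
  have hsub : ∀ n ∈ postSet F 2 c, 0 ≤ n := by
    intro n hn
    by_contra hneg
    simp only [Pi.le_def, not_forall, not_le, Pi.zero_apply] at hneg
    obtain ⟨i, hi⟩ := hneg
    have : Nontrivial (Fin s) := Fin.nontrivial_iff_two_le.2 hs
    obtain ⟨j, hj⟩ := exists_ne i
    obtain ⟨M, hM⟩ := mixed_pos hdim hCM hI F x hcr i j
    set m : Fin s → ℤ := fun _ => ((N + M : ℕ) : ℤ) with hm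
    have hne : ∀ k : Fin s, ∀ l, (0 : ℤ) ≤ (Pi.single k 1 : Fin s → ℤ) l := by
      intro k l
      have : (0 : Fin s → ℤ) ≤ Pi.single k 1 := Pi.single_nonneg.2 zero_le_one
      exact this l
    have h1 := hM m (fun k => by simp [hm])
    rw [← hN m (fun k => by simp [hm]),
      ← hN (m + Pi.single i 1) (fun k => by have := hne i k; simp [hm]; linarith),
      ← hN (m + Pi.single j 1) (fun k => by have := hne j k; simp [hm]; linarith),
      ← hN (m + Pi.single i 1 + Pi.single j 1) (fun k => by 
        have := hne i k; have := hne j k; simp [hm]; linarith)] at h1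
    set p : Fin s → ℤ := Function.update n i (-1) with hp
    have hnp : n ≤ p := by
      intro k
      by_cases hk : k = i
      · subst hk; simp [hp]; omega
      · simp [hp, hk]
    rw [hilbPoly_diff_const s c _ _ m p, ← hn p hnp,
      ← hn (p + Pi.single i 1) (fun k => by have := hne i k; have := hnp k; simp; linarith),
      ← hn (p + Pi.single j 1) (fun k => by have := hne j k; have := hnp k; simp; linarith),
      ← hn (p + Pi.single i 1 + Pi.single j 1) (fun k => by 
        have := hne i k; have := hne j k; have := hnp k; simp; linarith)] at h1
    have key : ∀ q : Fin s → ℤ, q i = -1 → hilbFn F (q + Pi.single i 1) = hilbFn F q := by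
      intro q hq
      unfold hilbFn
      rw [F.plus_eq (q + Pi.single i 1), F.plus_eq q]
      have : vplus (q + Pi.single i 1) = vplus q := by
        funext k
        by_cases hk : k = i
        · subst hk; simp [vplus, hq]
        · simp [vplus, hk]
      rw [this]
    have h2 := key p (by simp [hp])
    have h3 := key (p + Pi.single j 1) (by simp [hp, hj.symm])
    rw [add_right_comm] at h3
    linarith
  refine ⟨hsub, ?_, ?_⟩
  · intro n hn
    have h0 := hsub n hn
    have hle : evec s ≤ n + evec s := le_add_of_nonneg_left h0
    refine ⟨⟨add_nonneg h0 (fun _ => zero_le_one), ?_⟩, hle⟩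
    intro q hq
    obtain ⟨m, rfl⟩ : ∃ m, q = m + evec s := ⟨q - evec s, by abel⟩
    have hnm : n ≤ m := le_of_add_le_add_right hq
    have he : (0 : Fin s → ℤ) ≤ evec s := fun _ => zero_le_one
    rw [key_len hdim hCM hI F x hcr hvanish m (h0.trans hnm),
      hn m hnm, hn _ (hnm.trans (le_add_of_nonneg_right he)),
      hn _ ((hnm.trans (le_add_of_nonneg_right he)).trans (le_add_of_nonneg_right he))]
    exact hP m
  · rintro r ⟨-, hr⟩ her m hm
    have hm0 : 0 ≤ m := (sub_nonneg.2 her).trans hm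
    have he : (0 : Fin s → ℤ) ≤ evec s := fun _ => zero_le_one
    have hrm : r ≤ m + evec s := sub_le_iff_le_add.1 hm
    have main : ∀ j k : ℕ, N ≤ k + j → 
        hilbFn F (m + k • evec s) = hilbPoly s 2 c (m + k • evec s) := by
      intro j
      induction j with
      | zero =>
        intro k hk
        refine (hN _ fun i => ?_).symm
        have := hm0 i
        simp [evec] at this ⊢
        omega
      | succ j ih =>
        intro k hk
        have h1 := ih (k + 1) (by omega)
        have h2 := ih (k + 2) (by omega)
        have e1 : m + (k + 1) • evec s = m + k • evec s + evec s := by rw [succ_nsmul]; abel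
        have e2 : m + (k + 2) • evec s = m + k • evec s + evec s + evec s := by 
          rw [succ_nsmul, succ_nsmul]; abel
        rw [e1] at h1
        rw [e2] at h2
        have hk0 : 0 ≤ k • evec s := nsmul_nonneg he k
        have h3 := (key_len hdim hCM hI F x hcr hvanish (m + k • evec s) (add_nonneg hm0 hk0)).1
          (hr _ (hrm.trans (by gcongr; exact le_add_of_nonneg_right hk0)))
        have h4 := hP (m + k • evec s)
        linarith
    simpa using main N 0 (by omega)
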